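/- arXiv:1111.3217 — 2 statements merged into one kernel-verified Lean document; each statement's English description precedes it below -/
import Mathlib

section
/- Let q be an odd prime power (q = p^h, p odd prime), ℓ > 1, 0 < d < 2ℓ with gcd(ℓ,d) = 1 and ℓ + d odd, let β be a nonsquare of F_{q^{2ℓ}}, and let ω ∈ F_{q^{2ℓ}}^* satisfy ω^{q^ℓ} = −ω. Define on F_{q^{2ℓ}} the multiplication x⋆y = x·y^{q^ℓ} + x^{q^ℓ}·y + (β·(x·y^{q^d} + x^{q^d}·y) + β^{q^ℓ}·(x·y^{q^d} + x^{q^d}·y)^{q^ℓ})·ω. Then: (1) there exists ξ ∈ F_{q^{2ℓ}}^* with ξ^{q^{ℓ+d}−1} = β^{1−q^ℓ}, and for any such ξ the middle-nucleus set {ψ ∈ End_{F_p}(F_{q^{2ℓ}}) : for every y there exists z with ψ(x)⋆y = x⋆z for all x} equals {x ↦ a·x + b·ξ·x^{q^ℓ} : a,b ∈ F_q}, and hence has exactly q² elements; (2) the right-nucleus set {μ ∈ End_{F_p}(F_{q^{2ℓ}}) : for every y there exists z with μ(x⋆y) = x⋆z for all x} equals {x ↦ a·x : a ∈ F_q}, and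 hence has exactly q elements. -/
/-- The multiplication `x ⋆ y` of the Budaghyan–Helleseth presemifield
`BH(q,ℓ,d,β)` on `F_{q^{2ℓ}}` (realized as `GaloisField p (h * (2ℓ))`, `q = p^h`):
`x⋆y = x·y^{q^ℓ} + x^{q^ℓ}·y + (β·(x·y^{q^d} + x^{q^d}·y)
        + β^{q^ℓ}·(x·y^{q^d} + x^{q^d}·y)^{q^ℓ})·ω`. -/
noncomputable def bhMul (p h ℓ d q : ℕ) [Fact p.Prime]
    (β ω : GaloisField p (h * (2 * ℓ))) (x y : GaloisField p (h * (2 * ℓ))) :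
    GaloisField p (h * (2 * ℓ)) :=
  x * y ^ q ^ ℓ + x ^ q ^ ℓ * y +
    (β * (x * y ^ q ^ d + x ^ q ^ d * y) +
        β ^ q ^ ℓ * (x * y ^ q ^ d + x ^ q ^ d * y) ^ q ^ ℓ) * ω

/-- The Budaghyan–Helleseth product for two commuting endomorphisms `σ`, `τ` of a field. -/
def endoStar {E : Type*} [Field E] (σ τ : E →+* E) (β ω x y : E) : E :=
  x * σ y + σ x * y + (β * (x * τ y + τ x * y) + σ β * σ (x * τ y + τ x * y)) * ω

section Abstract

variable {E : Type*} [Field E]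

/-- Dedekind independence: the coefficient of the identity in a vanishing combination of
endomorphisms is zero. -/
theorem coeff_id_eq_zero {ι : Type*} [Fintype ι] (c : E) (b : ι → E) (θ : ι → E →+* E)
    (hθ : ∀ i, ∃ y, θ i y ≠ y) (H : ∀ y, c * y + ∑ i, b i * θ i y = 0) : c = 0 := by
  classical
  have hli := linearIndependent_monoidHom E E
  rw [linearIndependent_iff] at hli
  have h0 := hli (Finsupp.single (MonoidHom.id E) c
    + ∑ i, Finsupp.single ((θ i : E →+* E) : E →* E) (b i)) (by
      ext y
      simpa [Finsupp.linearCombination_single, map_sum] using H y)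
  have h1 := DFunLike.congr_fun h0 (MonoidHom.id E)
  have h2 : ∀ i, (Finsupp.single ((θ i : E →+* E) : E →* E) (b i)) (MonoidHom.id E) = 0 := by
    intro i
    apply Finsupp.single_eq_of_ne
    intro h
    obtain ⟨y, hy⟩ := hθ i
    exact hy (by simpa using (DFunLike.congr_fun h y).symm)
  simpa [Finsupp.finsetSum_apply, h2] using h1

variable {σ τ : E →+* E} {β ω : E}

theorem endoStar_comm (x y : E) : endoStar σ τ β ω x y = endoStar σ τ β ω y x := by
  simp only [endoStar, map_add, map_mul]; ring

theorem endoStar_split (h2 : (2 : E) ≠ 0) (hσσ : ∀ x, σ (σ x) = x) (hω0 : ω ≠ 0)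
    (hω : σ ω = -ω) {x y x' y' : E} (H : endoStar σ τ β ω x y = endoStar σ τ β ω x' y') :
    x * σ y + σ x * y = x' * σ y' + σ x' * y' ∧
    β * (x * τ y + τ x * y) + σ β * σ (x * τ y + τ x * y) =
      β * (x' * τ y' + τ x' * y') + σ β * σ (x' * τ y' + τ x' * y') := by
  have H' := congrArg σ H
  simp only [endoStar, map_add, map_mul, hσσ, hω] at H H' ⊢
  constructor
  · apply mul_left_cancel₀ h2
    linear_combination H + H'
  · apply mul_left_cancel₀ (mul_ne_zero h2 hω0)
    linear_combination H - H'

theorem eq_of_conj_form_eq (h2 : (2 : E) ≠ 0) (hσσ : ∀ x, σ (σ x) = x) {u v : E}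
    (H : ∀ y, u * σ y + σ u * y = v * σ y + σ v * y) : u = v := by
  by_contra hne
  have hne' : u - v ≠ 0 := sub_ne_zero.mpr hne
  have hs : σ u - σ v ≠ 0 := by
    rw [← map_sub]; exact (map_ne_zero σ).mpr hne'
  have h := H (σ (u - v)⁻¹)
  rw [hσσ, map_inv₀, map_sub] at h
  apply h2
  field_simp at h
  have : 2 * ((u - v) * (σ u - σ v)) = 0 := by linear_combination h
  rcases mul_eq_zero.mp this with h | h
  · exact h
  · exact absurd h (mul_ne_zero hne' hs)

/-- A map with an adjoint for the form `x σ(y) + σ(x) y` has the shape `x ↦ a x + c σ(x)`. -/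
theorem exists_coeffs_of_adjoint (h2 : (2 : E) ≠ 0) (hσσ : ∀ x, σ (σ x) = x) (hω0 : ω ≠ 0)
    (hω : σ ω = -ω) (f g : E → E)
    (H : ∀ x y, f x * σ y + σ (f x) * y = x * σ (g y) + σ x * g y) :
    ∃ a c : E, (∀ x, f x = a * x + c * σ x) ∧ ∀ y, g y = σ a * y + c * σ y := by
  have hadd : ∀ k m u v, σ k = k → σ m = m → f (k * u + m * v) = k * f u + m * f v := by
    intro k m u v hk hm
    apply eq_of_conj_form_eq h2 hσσ
    intro y
    rw [H]
    simp only [map_add, map_mul, hk, hm]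
    linear_combination -k * H u y - m * H v y
  have hf : ∀ x, f x = (f 1 + f ω / ω) / 2 * x + (f 1 - f ω / ω) / 2 * σ x := by
    intro x
    have h := hadd ((x + σ x) / 2) ((x - σ x) / (2 * ω)) 1 ω
      (by simp only [map_div₀, map_add, hσσ, map_ofNat]; ring)
      (by simp only [map_div₀, map_sub, map_mul, hσσ, map_ofNat, hω]; field_simp; ring)
    have hx : (x + σ x) / 2 * 1 + (x - σ x) / (2 * ω) * ω = x := by field_simp; ring
    rw [hx] at h
    rw [h]; field_simp; ring
  generalize (f 1 + f ω / ω) / 2 = a at hf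
  generalize (f 1 - f ω / ω) / 2 = c at hf
  refine ⟨a, c, hf, fun y => ?_⟩
  apply eq_of_conj_form_eq h2 hσσ
  intro x
  have h := H x y
  rw [hf] at h
  simp only [map_add, map_mul, hσσ] at h ⊢
  linear_combination -h

/-- Shape of the self-maps occurring in the middle nucleus. -/
theorem exists_coeffs_of_star (h2 : (2 : E) ≠ 0) (hσσ : ∀ x, σ (σ x) = x)
    (hστ : ∀ x, σ (τ x) = τ (σ x)) (hτ : Function.Surjective τ)
    (hω0 : ω ≠ 0) (hω : σ ω = -ω) (hβ : β ≠ 0)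
    (hσ1 : ∃ y, σ y ≠ y) (hτ1 : ∃ y, τ y ≠ y) (hστ1 : ∃ y, σ (τ y) ≠ y) (f g : E → E)
    (H : ∀ x y, endoStar σ τ β ω (f x) y = endoStar σ τ β ω x (g y)) :
    ∃ a c : E, (∀ x, f x = a * x + c * σ x) ∧ (∀ y, g y = σ a * y + c * σ y) ∧
      σ (τ a) = a ∧ σ β * σ (τ c) = β * c := by
  obtain ⟨a, c, hf, hg⟩ := exists_coeffs_of_adjoint h2 hσσ hω0 hω f g
    (fun x y => (endoStar_split h2 hσσ hω0 hω (H x y)).1)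
  have hcoef : ∀ y, β * (a - τ (σ a)) * τ y + (σ β * σ c - β * τ c) * σ (τ y) = 0 := by
    intro y
    refine coeff_id_eq_zero _ ![β * (a - τ (σ a)) * τ y + (σ β * σ c - β * τ c) * σ (τ y) |> σ,
      β * (τ a - σ a) * y + (σ β * σ (τ c) - β * c) * σ y,
      β * (τ a - σ a) * y + (σ β * σ (τ c) - β * c) * σ y |> σ] ![σ, τ, σ.comp τ] ?_ ?_
    · intro i; fin_cases i <;> simpa
    · intro x
      have h := (endoStar_split h2 hσσ hω0 hω (H x y)).2
      rw [hf, hg] at h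
      simp only [map_add, map_mul, hσσ, hστ] at h
      simp only [Fin.sum_univ_three, Matrix.cons_val, RingHom.comp_apply, map_add, map_mul,
        map_sub, hσσ, hστ]
      linear_combination h
  have hA : β * (a - τ (σ a)) = 0 := by
    refine coeff_id_eq_zero _ ![σ β * σ c - β * τ c] ![σ] (by intro i; fin_cases i; simpa) ?_
    intro y
    obtain ⟨y, rfl⟩ := hτ y
    simpa using hcoef y
  refine ⟨a, c, hf, hg, ?_, ?_⟩
  · rcases mul_eq_zero.mp hA with h | h
    · exact absurd h hβ
    · rw [hστ]; exact (sub_eq_zero.mp h).symm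
  · have h := congrArg σ (hcoef 1)
    simp only [hA, map_one, mul_one, zero_add, map_sub, map_mul, hσσ, map_zero] at h
    linear_combination -h

theorem endoStar_of_coeffs (hσσ : ∀ x, σ (σ x) = x) (hστ : ∀ x, σ (τ x) = τ (σ x))
    {a c : E} (ha : σ a = a) (ha' : τ a = a) (hc : σ β * σ (τ c) = β * c) (x y : E) :
    endoStar σ τ β ω (a * x + c * σ x) y = endoStar σ τ β ω x (a * y + c * σ y) := by
  have hc' := congrArg σ hc
  simp only [map_mul, hσσ, hστ] at hc hc'
  simp only [endoStar, map_add, map_mul, hσσ, hστ, ha, ha']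
  linear_combination (ω * x * τ (σ y) - ω * τ (σ x) * y) * (-hc') +
    (ω * τ x * σ y - ω * σ x * τ y) * hc

/-- The adjoint of multiplication by `x ⋆ y` for an invariant functional. -/
theorem functional_mul_endoStar {F : Type*} [AddCommGroup F] (t : E →+ F) {ρ : E →+* E}
    (hσσ : ∀ x, σ (σ x) = x) (hρ : ∀ x, τ (ρ x) = x) (htσ : ∀ x, t (σ x) = t x)
    (htτ : ∀ x, t (τ x) = t x) (n x y : E) :
    t (n * endoStar σ τ β ω x y) =
      t (x * ((n + σ n) * σ y + (n * ω + σ (n * ω)) * β * τ y +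
        ρ ((n * ω + σ (n * ω)) * β * y))) := by
  have e1 : n * endoStar σ τ β ω x y = n * (x * σ y) + n * (σ x * y) +
     (n * ω * (β * (x * τ y + τ x * y)) + n * ω * (σ (β * (x * τ y + τ x * y)))) := by
    simp only [endoStar, map_mul]; ring
  have e2 : t (n * (σ x * y)) = t (σ n * (x * σ y)) := by
    rw [← htσ]; simp only [map_mul, hσσ]
  have e3 : t (n * ω * (σ (β * (x * τ y + τ x * y)))) =
      t (σ (n * ω) * (β * (x * τ y + τ x * y))) := by
    rw [← htσ, map_mul, hσσ]
  have e4 : t (x * ρ ((n * ω + σ (n * ω)) * β * y)) =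
      t ((n * ω + σ (n * ω)) * β * y * τ x) := by
    rw [← htτ, map_mul, hρ, mul_comm]
  rw [mul_add x, map_add, e4, e1, map_add, map_add, map_add, e2, e3, ← map_add, ← map_add,
    ← map_add, ← map_add]
  congr 1
  ring

/-- The right nucleus consists of scalars. -/
theorem exists_scalar_of_star {F : Type*} [AddCommGroup F] (t : E →+ F) {ρ : E →+* E}
    (h2 : (2 : E) ≠ 0) (hσσ : ∀ x, σ (σ x) = x)
    (hστ : ∀ x, σ (τ x) = τ (σ x)) (hρ : ∀ x, τ (ρ x) = x)
    (hω0 : ω ≠ 0) (hω : σ ω = -ω) (hβ : β ≠ 0)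
    (hσ1 : ∃ y, σ y ≠ y) (hτ1 : ∃ y, τ y ≠ y) (hστ1 : ∃ y, σ (τ y) ≠ y)
    (hρ1 : ∃ y, ρ y ≠ y) (hρρ1 : ∃ y, ρ (ρ y) ≠ y) (hρσ1 : ∃ y, ρ (σ y) ≠ y)
    (htσ : ∀ x, t (σ x) = t x) (htτ : ∀ x, t (τ x) = t x)
    (ht : ∀ u, (∀ x, t (x * u) = 0) → u = 0)
    (hadj : ∀ (ν : E →+ E) (m : E), ∃ n, ∀ u, t (m * ν u) = t (n * u))
    (μ : E →+ E) (g : E → E)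
    (H : ∀ x y, μ (endoStar σ τ β ω x y) = endoStar σ τ β ω x (g y)) :
    ∃ a, σ (τ a) = a ∧ ∀ x, μ x = a * x := by
  have hsymm : ∀ x y, endoStar σ τ β ω (g x) y = endoStar σ τ β ω x (g y) := fun x y => by
    rw [endoStar_comm, ← H, ← H, endoStar_comm]
  obtain ⟨a, c, hg, hg', ha, -⟩ := exists_coeffs_of_star h2 hσσ hστ (fun x => ⟨ρ x, hρ x⟩)
    hω0 hω hβ hσ1 hτ1 hστ1 g g hsymm
  have hc : c = 0 := by
    obtain ⟨n, hn⟩ := hadj μ 1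
    have key : ∀ y, 2 * σ (g y) = (n + σ n) * σ y + (n * ω + σ (n * ω)) * β * τ y +
        ρ ((n * ω + σ (n * ω)) * β * y) := by
      intro y
      apply sub_eq_zero.mp
      apply ht
      intro x
      have h := hn (endoStar σ τ β ω x y)
      rw [H, functional_mul_endoStar t hσσ hρ htσ htτ,
        functional_mul_endoStar t hσσ hρ htσ htτ] at h
      simp only [map_one, one_mul, hω, add_neg_cancel, zero_mul, map_zero, add_zero,
        one_add_one_eq_two] at h
      rw [mul_sub, map_sub, h, sub_self]
    generalize (n * ω + σ (n * ω)) * β = v at key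
    have h2c : 2 * σ c = 0 := by
      refine coeff_id_eq_zero _ ![2 * a - (n + σ n), -v, -ρ v] ![σ, τ, ρ] ?_ ?_
      · intro i; fin_cases i <;> simpa
      · intro y
        have h := key y
        rw [hg'] at h
        simp only [map_add, map_mul, hσσ] at h
        simp only [Fin.sum_univ_three, Matrix.cons_val]
        linear_combination h
    simpa [h2] using h2c
  have hσa : σ a = a := by simpa [hc] using (hg' 1).symm.trans (hg 1)
  have hτa : τ a = a := by rwa [hστ, hσa] at ha
  have hfaithful : ∀ n, (∀ x y, t (n * endoStar σ τ β ω x y) = 0) → n = 0 := by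
    intro n hn
    have key : ∀ y, (n + σ n) * σ y + (n * ω + σ (n * ω)) * β * τ y +
        ρ ((n * ω + σ (n * ω)) * β * y) = 0 := by
      intro y
      apply ht
      intro x
      rw [← functional_mul_endoStar t hσσ hρ htσ htτ, hn]
    generalize hv : (n * ω + σ (n * ω)) * β = v at key
    have hN : n + σ n = 0 := by
      refine coeff_id_eq_zero _ ![v, ρ v] ![σ.comp τ, ρ.comp σ] ?_ ?_
      · intro i; fin_cases i <;> simpa
      · intro y
        have h := key (σ y)
        simp only [map_mul, hσσ] at h
        simp only [Fin.sum_univ_two, Matrix.cons_val, RingHom.comp_apply, hστ]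
        linear_combination h
    have hv0 : v = 0 := by
      refine coeff_id_eq_zero _ ![ρ v] ![ρ.comp ρ] ?_ ?_
      · intro i; fin_cases i; simpa
      · intro y
        have h := key (ρ y)
        simp only [map_mul, hN, hρ] at h
        simp only [Fin.sum_univ_one, Matrix.cons_val, RingHom.comp_apply]
        linear_combination h
    rw [hv0, mul_eq_zero, or_iff_left hβ, map_mul, hω] at hv
    apply mul_left_cancel₀ (mul_ne_zero h2 hω0)
    linear_combination hv + ω * hN
  refine ⟨a, ha, fun u => sub_eq_zero.mp (ht _ fun m => ?_)⟩
  obtain ⟨n, hn⟩ := hadj (μ - AddMonoidHom.mulLeft a) m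
  have hn0 : n = 0 := by
    refine hfaithful n fun x y => ?_
    rw [← hn, AddMonoidHom.sub_apply, H, hg', AddMonoidHom.coe_mulLeft]
    have : endoStar σ τ β ω x (σ a * y + c * σ y) = a * endoStar σ τ β ω x y := by
      simp only [endoStar, hc, map_add, map_mul, hσa, hτa, map_zero]; ring
    rw [this, sub_self, mul_zero, map_zero]
  simpa [hn0] using hn u

end Abstract

section Frobenius

variable {p : ℕ} [Fact p.Prime]

/-- A nontrivial Frobenius power moves some element. -/
theorem exists_iterateFrobenius_ne {n m : ℕ} (hn : n ≠ 0) (hm : ¬ n ∣ m) :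
    ∃ y : GaloisField p n, iterateFrobenius (GaloisField p n) p m y ≠ y := by
  by_contra! h
  apply hm
  have := FiniteField.orderOf_frobeniusAlgHom (ZMod p) (GaloisField p n)
  rw [GaloisField.finrank p hn] at this
  rw [← this, orderOf_dvd_iff_pow_eq_one]
  ext y
  have hy := h y
  rw [iterateFrobenius_def] at hy
  rw [AlgHom.coe_pow, FiniteField.coe_frobeniusAlgHom, ZMod.card, pow_iterate]
  simpa using hy

theorem GaloisField.pow_card {n : ℕ} (hn : n ≠ 0) (x : GaloisField p n) : x ^ p ^ n = x := by
  rw [← GaloisField.card p n hn]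
  have := Fintype.ofFinite (GaloisField p n)
  rw [Nat.card_eq_fintype_card, FiniteField.pow_card]

theorem GaloisField.trace_iterateFrobenius {n : ℕ} (m : ℕ) (x : GaloisField p n) :
    Algebra.trace (ZMod p) (GaloisField p n) (iterateFrobenius (GaloisField p n) p m x) =
      Algebra.trace (ZMod p) (GaloisField p n) x := by
  have := Algebra.trace_eq_of_algEquiv
    ((FiniteField.frobeniusAlgEquivOfAlgebraic (ZMod p) (GaloisField p n)) ^ m) x
  rw [← this]
  congr 1
  rw [AlgEquiv.coe_pow, FiniteField.coe_frobeniusAlgEquivOfAlgebraic, ZMod.card, pow_iterate]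
  rfl

theorem GaloisField.exists_trace_adjoint {n : ℕ} (ν : GaloisField p n →+ GaloisField p n)
    (m : GaloisField p n) : ∃ c, ∀ u, Algebra.trace (ZMod p) (GaloisField p n) (m * ν u) =
      Algebra.trace (ZMod p) (GaloisField p n) (c * u) := by
  have hB := traceForm_nondegenerate (ZMod p) (GaloisField p n)
  refine ⟨((Algebra.traceForm (ZMod p) (GaloisField p n)).toDual hB).symm
    ((Algebra.traceForm (ZMod p) (GaloisField p n) m).comp (ν.toZModLinearMap p)), fun u => ?_⟩
  exact (LinearMap.BilinForm.apply_toDual_symm_apply (hB := hB)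
    (f := (Algebra.traceForm (ZMod p) (GaloisField p n) m).comp (ν.toZModLinearMap p)) u).symm

theorem GaloisField.eq_zero_of_trace_mul {n : ℕ} (u : GaloisField p n)
    (h : ∀ x, Algebra.trace (ZMod p) (GaloisField p n) (x * u) = 0) : u = 0 :=
  (traceForm_nondegenerate (ZMod p) (GaloisField p n)).2 u h

theorem GaloisField.card_pow_eq_self {h n : ℕ} (hh : h ≠ 0) (hn : n ≠ 0) (hd : h ∣ n) :
    Nat.card {a : GaloisField p n // a ^ p ^ h = a} = p ^ h := by
  obtain ⟨f⟩ := FiniteField.nonempty_algHom_of_finrank_dvd (F := ZMod p) (K := GaloisField p h)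
    (L := GaloisField p n) (by rwa [GaloisField.finrank p hh, GaloisField.finrank p hn])
  apply le_antisymm
  · have hp1 : 1 < p := (Fact.out : p.Prime).one_lt
    have h0 := FiniteField.X_pow_card_pow_sub_X_ne_zero (GaloisField p n) hh hp1
    have hdeg := FiniteField.X_pow_card_pow_sub_X_natDegree_eq (GaloisField p n) hh hp1
    refine le_trans (le_of_eq ?_)
      ((Polynomial.ncard_rootSet_le _ (GaloisField p n)).trans hdeg.le)
    rw [← Nat.card_coe_set_eq]
    refine Nat.card_congr (Equiv.subtypeEquivRight fun a => ?_)
    simp [Polynomial.mem_rootSet, h0, sub_eq_zero]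
  · refine (GaloisField.card p h hh).symm.le.trans ?_
    refine Nat.card_le_card_of_injective
      (fun x => ⟨f x, (map_pow f x _).symm.trans (congrArg f (GaloisField.pow_card hh x))⟩) fun x y hxy => ?_
    exact f.injective (congrArg Subtype.val hxy)

theorem pow_eq_self_of_gcd {E : Type*} [Monoid E] {q m n : ℕ} (hmn : m.gcd n = 1) {a : E}
    (hm : a ^ q ^ m = a) (hn : a ^ q ^ n = a) : a ^ q = a := by
  have h1 : Function.IsPeriodicPt (fun x : E => x ^ q) m a := by
    rw [Function.IsPeriodicPt, Function.IsFixedPt, pow_iterate]; exact hm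
  have h2 : Function.IsPeriodicPt (fun x : E => x ^ q) n a := by
    rw [Function.IsPeriodicPt, Function.IsFixedPt, pow_iterate]; exact hn
  have h3 := h1.gcd h2
  rw [hmn] at h3
  exact h3

theorem pow_pow_eq_self {E : Type*} [Monoid E] {q : ℕ} {a : E} (ha : a ^ q = a) (n : ℕ) :
    a ^ q ^ n = a := by
  have h : Function.IsFixedPt (fun x : E => x ^ q) a := ha
  have h' := h.iterate n
  rwa [Function.IsFixedPt, pow_iterate] at h'

/-- If `gcd (m, n) = 1` and `β ^ (q ^ n) = β`, then `β ^ (1 - q ^ k)` is a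
`(q ^ m - 1)`-th power. -/
theorem exists_pow_eq_zpow {E : Type*} [Field E] {q m n : ℕ} (hq : 0 < q) (hmn : m.gcd n = 1)
    (k : ℕ) {β : E} (hβ : β ≠ 0) (hn : β ^ q ^ n = β) :
    ∃ ξ : E, ξ ≠ 0 ∧ ξ ^ (q ^ m - 1) = β ^ ((1 : ℤ) - (q : ℤ) ^ k) := by
  have hcast : ∀ j, ((q ^ j - 1 : ℕ) : ℤ) = (q : ℤ) ^ j - 1 := fun j => by
    rw [Nat.cast_sub (Nat.one_le_pow _ _ hq)]; simp
  have hord : β ^ ((q : ℤ) ^ n - 1) = 1 := by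
    rw [zpow_sub_one₀ hβ, ← Nat.cast_pow, zpow_natCast, hn, mul_inv_cancel₀ hβ]
  have hbez := Nat.gcd_eq_gcd_ab (q ^ m - 1) (q ^ n - 1)
  rw [Nat.pow_sub_one_gcd_pow_sub_one, hmn, hcast, hcast, hcast, pow_one] at hbez
  generalize (q ^ m - 1).gcdA (q ^ n - 1) = A at hbez
  generalize (q ^ m - 1).gcdB (q ^ n - 1) = B at hbez
  obtain ⟨S, hS⟩ := sub_one_dvd_pow_sub_one (q : ℤ) k
  refine ⟨β ^ (-(S * A)), zpow_ne_zero _ hβ, ?_⟩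
  have hexp : (1 : ℤ) - (q : ℤ) ^ k =
      -(S * A) * ((q : ℤ) ^ m - 1) + ((q : ℤ) ^ n - 1) * (-(S * B)) := by
    linear_combination -hS - S * hbez
  rw [hexp, zpow_add₀ hβ, zpow_mul β ((q : ℤ) ^ n - 1), hord, one_zpow, mul_one, zpow_mul,
    ← hcast, zpow_natCast]

end Frobenius

section BudaghyanHelleseth

theorem bhMul_eq_endoStar (p h ℓ d : ℕ) [Fact p.Prime] (β ω x y : GaloisField p (h * (2 * ℓ))) :
    bhMul p h ℓ d (p ^ h) β ω x y =
      endoStar (iterateFrobenius _ p (h * ℓ)) (iterateFrobenius _ p (h * d)) β ω x y := by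
  simp only [bhMul, endoStar, iterateFrobenius_def, pow_mul]

/-- The map `x ↦ a x + c x ^ (p ^ m)`. -/
noncomputable def linFrobMap (p n m : ℕ) [Fact p.Prime] (a c : GaloisField p n) :
    GaloisField p n →ₗ[ZMod p] GaloisField p n :=
  (AddMonoidHom.mulLeft a +
    (AddMonoidHom.mulLeft c).comp (iterateFrobenius (GaloisField p n) p m)).toZModLinearMap p

theorem linFrobMap_apply (p n m : ℕ) [Fact p.Prime] (a c x : GaloisField p n) :
    linFrobMap p n m a c x = a * x + c * iterateFrobenius (GaloisField p n) p m x := rfl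

end BudaghyanHelleseth


theorem statement15 (p h ℓ d q : ℕ) [Fact p.Prime] (hp : Odd p) (hh : 0 < h)
    (hq : q = p ^ h) (hℓ : 1 < ℓ) (hd0 : 0 < d) (hd2 : d < 2 * ℓ)
    (hgcd : Nat.gcd ℓ d = 1) (hodd : Odd (ℓ + d))
    (β ω : GaloisField p (h * (2 * ℓ)))
    (hβ : ¬ ∃ c : GaloisField p (h * (2 * ℓ)), c ^ 2 = β)
    (hω0 : ω ≠ 0) (hω : ω ^ q ^ ℓ = -ω) :
    -- (1) existence of ξ with ξ^{q^{ℓ+d}−1} = β^{1−q^ℓ} ...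
    (∃ ξ : GaloisField p (h * (2 * ℓ)), ξ ≠ 0 ∧
      ξ ^ (q ^ (ℓ + d) - 1) = β ^ ((1 : ℤ) - (q : ℤ) ^ ℓ)) ∧
    -- ... and for any such ξ the middle-nucleus set is
    -- `{x ↦ a·x + b·ξ·x^{q^ℓ} : a, b ∈ F_q}`
    (∀ ξ : GaloisField p (h * (2 * ℓ)), ξ ≠ 0 →
      ξ ^ (q ^ (ℓ + d) - 1) = β ^ ((1 : ℤ) - (q : ℤ) ^ ℓ) →
      {ψ : GaloisField p (h * (2 * ℓ)) →ₗ[ZMod p] GaloisField p (h * (2 * ℓ)) |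
          ∀ y, ∃ z, ∀ x, bhMul p h ℓ d q β ω (ψ x) y = bhMul p h ℓ d q β ω x z} =
        {ψ : GaloisField p (h * (2 * ℓ)) →ₗ[ZMod p] GaloisField p (h * (2 * ℓ)) |
          ∃ a b : GaloisField p (h * (2 * ℓ)), a ^ q = a ∧ b ^ q = b ∧
            ∀ x, ψ x = a * x + b * ξ * x ^ q ^ ℓ}) ∧
    -- hence the middle-nucleus set has exactly q² elements
    Nat.card {ψ : GaloisField p (h * (2 * ℓ)) →ₗ[ZMod p] GaloisField p (h * (2 * ℓ)) |
        ∀ y, ∃ z, ∀ x, bhMul p h ℓ d q β ω (ψ x) y = bhMul p h ℓ d q β ω x z} = q ^ 2 ∧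
    -- (2) the right-nucleus set is `{x ↦ a·x : a ∈ F_q}` ...
    {μ : GaloisField p (h * (2 * ℓ)) →ₗ[ZMod p] GaloisField p (h * (2 * ℓ)) |
        ∀ y, ∃ z, ∀ x, μ (bhMul p h ℓ d q β ω x y) = bhMul p h ℓ d q β ω x z} =
      {μ : GaloisField p (h * (2 * ℓ)) →ₗ[ZMod p] GaloisField p (h * (2 * ℓ)) |
        ∃ a : GaloisField p (h * (2 * ℓ)), a ^ q = a ∧ ∀ x, μ x = a * x} ∧
    -- ... hence has exactly q elements
    Nat.card {μ : GaloisField p (h * (2 * ℓ)) →ₗ[ZMod p] GaloisField p (h * (2 * ℓ)) |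
        ∀ y, ∃ z, ∀ x, μ (bhMul p h ℓ d q β ω x y) = bhMul p h ℓ d q β ω x z} = q := by
  subst hq
  have hp1 : 1 < p := (Fact.out : p.Prime).one_lt
  have hq0 : 0 < p ^ h := pow_pos (by omega) h
  have hn : h * (2 * ℓ) ≠ 0 := by positivity
  have hg2 : (ℓ + d).gcd (2 * ℓ) = 1 := by
    have h1 : (ℓ + d).Coprime ℓ := by
      rw [Nat.coprime_self_add_left]; exact Nat.Coprime.symm hgcd
    exact (Nat.Coprime.mul_right (Nat.coprime_two_right.mpr hodd) h1)
  have hndvd : ∀ m, ¬ 2 * ℓ ∣ m → ¬ h * (2 * ℓ) ∣ h * m := fun m hm hd =>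
    hm (Nat.dvd_of_mul_dvd_mul_left hh hd)
  have hne : ∀ m, ¬ 2 * ℓ ∣ m →
      ∃ y : GaloisField p (h * (2 * ℓ)), iterateFrobenius _ p (h * m) y ≠ y := fun m hm =>
    exists_iterateFrobenius_ne hn (hndvd m hm)
  have hcomp : ∀ m m' (x : GaloisField p (h * (2 * ℓ))), iterateFrobenius _ p (h * m)
      (iterateFrobenius _ p (h * m') x) = iterateFrobenius _ p (h * (m + m')) x := by
    intro m m' x
    rw [mul_add, iterateFrobenius_add_apply]
  have hid : ∀ m, 2 * ℓ = m → ∀ x : GaloisField p (h * (2 * ℓ)),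
      iterateFrobenius _ p (h * m) x = x := by
    rintro m rfl x
    exact GaloisField.pow_card hn x
  have hℓd : ¬ ℓ ∣ d := fun hd => by
    rw [Nat.gcd_eq_left hd] at hgcd; omega
  have hd2ℓ : ¬ 2 * ℓ ∣ d := fun hd => hℓd (dvd_of_mul_left_dvd hd)
  have hnℓ : ¬ 2 * ℓ ∣ ℓ := fun hd => by have := Nat.le_of_dvd (by omega) hd; omega
  have hnℓd : ¬ 2 * ℓ ∣ ℓ + d := fun hd =>
    hℓd ((Nat.dvd_add_right (dvd_refl ℓ)).mp (dvd_of_mul_left_dvd hd))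
  have hnρ : ¬ 2 * ℓ ∣ 2 * ℓ - d := fun hd => by
    have := Nat.le_of_dvd (by omega) hd; omega
  have hnρρ : ¬ 2 * ℓ ∣ (2 * ℓ - d) + (2 * ℓ - d) := fun hd => by
    obtain ⟨e, he⟩ := hd
    rcases e with _ | _ | e
    · omega
    · have : d = ℓ := by omega
      exact hℓd (this ▸ dvd_refl _)
    · have : 2 * ℓ * (e + 1 + 1) ≥ 2 * ℓ * 2 := Nat.mul_le_mul_left _ (by omega)
      omega
  have hnρσ : ¬ 2 * ℓ ∣ (2 * ℓ - d) + ℓ := fun hd => by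
    apply hℓd
    have h1 : ℓ ∣ (2 * ℓ - d) + ℓ := dvd_of_mul_left_dvd hd
    have h2 : ℓ ∣ 2 * ℓ - d := (Nat.dvd_add_left (dvd_refl ℓ)).mp h1
    exact (Nat.dvd_sub_iff_right hd2.le (dvd_mul_left _ _)).mp h2
  have h2 : (2 : GaloisField p (h * (2 * ℓ))) ≠ 0 :=
    Ring.two_ne_zero (by rw [ringChar.eq _ p]; rintro rfl; exact absurd hp (by decide))
  have hβ0 : β ≠ 0 := by
    rintro rfl
    exact hβ ⟨0, by simp⟩
  have hfix : ∀ a : GaloisField p (h * (2 * ℓ)), iterateFrobenius _ p (h * (ℓ + d)) a = a →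
      a ^ p ^ h = a := fun a ha =>
    pow_eq_self_of_gcd hg2 (by rw [← pow_mul]; exact ha)
      (by rw [← pow_mul]; exact GaloisField.pow_card hn a)
  have hfix' : ∀ (a : GaloisField p (h * (2 * ℓ))) (m : ℕ), a ^ p ^ h = a →
      iterateFrobenius _ p (h * m) a = a := fun a m ha => by
    rw [iterateFrobenius_def, pow_mul]; exact pow_pow_eq_self ha m
  have hω' : iterateFrobenius _ p (h * ℓ) ω = -ω := by
    rw [iterateFrobenius_def, pow_mul]; exact hω
  simp only [bhMul_eq_endoStar]
  have hσσ := fun x => (hcomp ℓ ℓ x).trans (hid (ℓ + ℓ) (by omega) x)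
  have hρ := fun x => (hcomp d (2 * ℓ - d) x).trans (hid (d + (2 * ℓ - d)) (by omega) x)
  have hστ := fun x =>
    (hcomp ℓ d x).trans ((congrArg (fun m => iterateFrobenius _ p (h * m) x)
      (add_comm ℓ d)).trans (hcomp d ℓ x).symm)
  have hexξ := exists_pow_eq_zpow (m := ℓ + d) (n := 2 * ℓ) hq0 hg2 ℓ hβ0
    (by rw [← pow_mul]; exact GaloisField.pow_card hn β)
  have hσdef : ∀ x : GaloisField p (h * (2 * ℓ)),
      iterateFrobenius _ p (h * ℓ) x = x ^ (p ^ h) ^ ℓ := fun x => by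
    rw [iterateFrobenius_def, pow_mul]
  have hhn : h ∣ h * (2 * ℓ) := dvd_mul_right _ _
  have hξeq : ∀ ξ : GaloisField p (h * (2 * ℓ)), ξ ≠ 0 →
      ξ ^ ((p ^ h) ^ (ℓ + d) - 1) = β ^ ((1 : ℤ) - ((p ^ h : ℕ) : ℤ) ^ ℓ) →
      iterateFrobenius _ p (h * ℓ) β *
        iterateFrobenius _ p (h * ℓ) (iterateFrobenius _ p (h * d) ξ) = β * ξ := by
    intro ξ hξ0 hξ
    rw [zpow_sub₀ hβ0, zpow_one, ← Nat.cast_pow, zpow_natCast, ← hσdef] at hξ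
    have h1 : iterateFrobenius _ p (h * (ℓ + d)) ξ = ξ ^ ((p ^ h) ^ (ℓ + d) - 1) * ξ := by
      rw [pow_sub_one_mul (pow_pos hq0 _).ne', iterateFrobenius_def, pow_mul]
    have h3 : iterateFrobenius (GaloisField p (h * (2 * ℓ))) p (h * ℓ) β ≠ 0 :=
      (map_ne_zero _).mpr hβ0
    rw [hcomp, h1, hξ]
    field_simp
  have hmid : ∀ ξ : GaloisField p (h * (2 * ℓ)), ξ ≠ 0 →
      ξ ^ ((p ^ h) ^ (ℓ + d) - 1) = β ^ ((1 : ℤ) - ((p ^ h : ℕ) : ℤ) ^ ℓ) →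
      {ψ : GaloisField p (h * (2 * ℓ)) →ₗ[ZMod p] GaloisField p (h * (2 * ℓ)) |
          ∀ y, ∃ z, ∀ x, endoStar (iterateFrobenius _ p (h * ℓ))
            (iterateFrobenius _ p (h * d)) β ω (ψ x) y =
            endoStar (iterateFrobenius _ p (h * ℓ))
            (iterateFrobenius _ p (h * d)) β ω x z} =
        {ψ : GaloisField p (h * (2 * ℓ)) →ₗ[ZMod p] GaloisField p (h * (2 * ℓ)) |
          ∃ a b : GaloisField p (h * (2 * ℓ)), a ^ p ^ h = a ∧ b ^ p ^ h = b ∧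
            ∀ x, ψ x = a * x + b * ξ * x ^ (p ^ h) ^ ℓ} := by
    intro ξ hξ0 hξ
    have hξ' := hξeq ξ hξ0 hξ
    ext ψ
    simp only [Set.mem_ofPred_eq, ← hσdef]
    constructor
    · intro H
      choose g hg using H
      obtain ⟨a, c, hψ, -, ha, hc⟩ := exists_coeffs_of_star h2 hσσ hστ (fun x => ⟨_, hρ x⟩)
        hω0 hω' hβ0 (hne _ hnℓ) (hne _ hd2ℓ) (by simpa only [hcomp] using hne _ hnℓd) ψ g
        (fun x y => hg y x)
      refine ⟨a, c / ξ, hfix a (by rw [← hcomp, ha]), hfix _ ?_, fun x => ?_⟩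
      · rw [hcomp] at hc hξ'
        have h3 : iterateFrobenius (GaloisField p (h * (2 * ℓ))) p (h * ℓ) β ≠ 0 :=
          (map_ne_zero _).mpr hβ0
        have h4 : iterateFrobenius (GaloisField p (h * (2 * ℓ))) p (h * (ℓ + d)) ξ ≠ 0 :=
          (map_ne_zero _).mpr hξ0
        rw [map_div₀, div_eq_div_iff h4 hξ0]
        apply mul_left_cancel₀ (mul_ne_zero hβ0 h3)
        linear_combination β * ξ * hc - β * c * hξ'
      · rw [hψ, div_mul_cancel₀ _ hξ0]
    · rintro ⟨a, b, ha, hb, hψ⟩ y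
      refine ⟨a * y + b * ξ * iterateFrobenius _ p (h * ℓ) y, fun x => ?_⟩
      rw [hψ]
      apply endoStar_of_coeffs hσσ hστ (hfix' a ℓ ha) (hfix' a d ha)
      rw [map_mul, map_mul, hfix' b d hb, hfix' b ℓ hb]
      linear_combination b * hξ'
  have hright : {μ : GaloisField p (h * (2 * ℓ)) →ₗ[ZMod p] GaloisField p (h * (2 * ℓ)) |
          ∀ y, ∃ z, ∀ x, μ (endoStar (iterateFrobenius _ p (h * ℓ))
            (iterateFrobenius _ p (h * d)) β ω x y) =
            endoStar (iterateFrobenius _ p (h * ℓ))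
            (iterateFrobenius _ p (h * d)) β ω x z} =
        {μ : GaloisField p (h * (2 * ℓ)) →ₗ[ZMod p] GaloisField p (h * (2 * ℓ)) |
          ∃ a : GaloisField p (h * (2 * ℓ)), a ^ p ^ h = a ∧ ∀ x, μ x = a * x} := by
    ext μ
    constructor
    · intro H
      choose g hg using H
      obtain ⟨a, ha, hμ⟩ := exists_scalar_of_star
        (Algebra.trace (ZMod p) (GaloisField p (h * (2 * ℓ)))).toAddMonoidHom h2 hσσ hστ hρ
        hω0 hω' hβ0 (hne _ hnℓ) (hne _ hd2ℓ) (by simpa only [hcomp] using hne _ hnℓd)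
        (hne _ hnρ) (by simpa only [hcomp] using hne _ hnρρ)
        (by simpa only [hcomp] using hne _ hnρσ)
        (GaloisField.trace_iterateFrobenius _) (GaloisField.trace_iterateFrobenius _)
        GaloisField.eq_zero_of_trace_mul GaloisField.exists_trace_adjoint μ.toAddMonoidHom g
        (fun x y => hg y x)
      exact ⟨a, hfix a (by rw [← hcomp, ha]), hμ⟩
    · rintro ⟨a, ha, hμ⟩ y
      refine ⟨a * y, fun x => ?_⟩
      simp only [hμ, endoStar, map_mul, map_add, hfix' a ℓ ha, hfix' a d ha]
      ring
  refine ⟨hexξ, hmid, ?_, hright, ?_⟩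
  · obtain ⟨ξ, hξ0, hξ⟩ := hexξ
    have hcard : Nat.card ({a : GaloisField p (h * (2 * ℓ)) // a ^ p ^ h = a} ×
        {a : GaloisField p (h * (2 * ℓ)) // a ^ p ^ h = a}) = (p ^ h) ^ 2 := by
      rw [Nat.card_prod, GaloisField.card_pow_eq_self hh.ne' hn hhn, sq]
    rw [hmid ξ hξ0 hξ]
    refine Eq.trans (Nat.card_congr (Equiv.ofBijective
      (fun ab => ⟨linFrobMap p _ (h * ℓ) ab.1 (ab.2 * ξ), ab.1, ab.2, ab.1.2, ab.2.2,
        fun x => by rw [linFrobMap_apply, hσdef]⟩) ⟨?_, ?_⟩)).symm hcard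
    · rintro ⟨⟨a, ha⟩, ⟨b, hb⟩⟩ ⟨⟨a', ha'⟩, ⟨b', hb'⟩⟩ hab
      have key : ∀ x, a * x + b * ξ * iterateFrobenius _ p (h * ℓ) x =
          a' * x + b' * ξ * iterateFrobenius _ p (h * ℓ) x :=
        fun x => DFunLike.congr_fun (congrArg Subtype.val hab) x
      have haa : a - a' = 0 := by
        refine coeff_id_eq_zero _ ![(b - b') * ξ] ![iterateFrobenius _ p (h * ℓ)] ?_ ?_
        · intro i; fin_cases i; exact hne _ hnℓ
        · intro x
          simp only [Fin.sum_univ_one, Matrix.cons_val]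
          linear_combination key x
      have haa' := sub_eq_zero.mp haa
      subst haa'
      have hbb := key 1
      simp only [map_one, mul_one, add_right_inj] at hbb
      have hbb' := mul_right_cancel₀ hξ0 hbb
      subst hbb'
      rfl
    · rintro ⟨ψ, a, b, ha, hb, hψ⟩
      refine ⟨(⟨a, ha⟩, ⟨b, hb⟩), Subtype.ext (LinearMap.ext fun x => ?_)⟩
      rw [hψ, ← hσdef]; rfl
  · rw [hright]
    refine Eq.trans (Nat.card_congr (Equiv.ofBijective
      (fun a => ⟨LinearMap.mulLeft (ZMod p) a.1, a.1, a.2, fun x => rfl⟩) ⟨?_, ?_⟩)).symm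
      (GaloisField.card_pow_eq_self hh.ne' hn hhn)
    · rintro ⟨a, ha⟩ ⟨b, hb⟩ hab
      have := DFunLike.congr_fun (congrArg Subtype.val hab) 1
      simpa using this
    · rintro ⟨μ, a, ha, hμ⟩
      exact ⟨⟨a, ha⟩, Subtype.ext (LinearMap.ext fun x => (hμ x).symm)⟩
end

section
/- Let q be an odd prime power (q = p^g, p odd prime), let h be odd, 0 < n < 3h with gcd(h,n) = 1, and assume either h + n ≡ 0 (mod 3) or q ≡ 1 (mod 3). Let u be a primitive element (a generator of the multiplicative group) of F_{q^{3h}} and set v = u^{q^h − 1}. Define on F_{q^{3h}} the multiplication x⋆y = y^{q^n}·x + y·x^{q^n} − v·(y^{q^{h+n}}·x^{q^{2h}} + y^{q^{2h}}·x^{q^{h+n}}). Then the middle-nucleus set {ψ ∈ End_{F_p}(F_{q^{3h}}) : for every y there exists z with ψ(x)⋆y = x⋆z for all x} equals the set of scalar maps {x ↦ λ·x : λ ∈ F_q}, and hence has exactly q elements. -/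
/-- The multiplication of a Zha–Kyureghyan–Wang presemifield on `F_{q^{3h}}`
(realized as `GaloisField p (g * (3h))`, `q = p^g`):
`x⋆y = y^{q^n}·x + y·x^{q^n} − v·(y^{q^{h+n}}·x^{q^{2h}} + y^{q^{2h}}·x^{q^{h+n}})`. -/
noncomputable def zkwMul (p g h n q : ℕ) [Fact p.Prime]
    (v : GaloisField p (g * (3 * h))) (x y : GaloisField p (g * (3 * h))) :
    GaloisField p (g * (3 * h)) :=
  y ^ q ^ n * x + y * x ^ q ^ n -
    v * (y ^ q ^ (h + n) * x ^ q ^ (2 * h) + y ^ q ^ (2 * h) * x ^ q ^ (h + n))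

section GaloisExpansion

variable {K L : Type*} [Field K] [Field L] [Algebra K L]

/-- Dedekind independence of distinct automorphisms, in pointwise form. -/
theorem coeff_eq_zero_of_forall_sum_algEquiv_eq_zero {ι : Type*} [Fintype ι]
    {e : ι → L ≃ₐ[K] L} (he : Function.Injective e) {a : ι → L}
    (h : ∀ x, ∑ i, a i * e i x = 0) (i : ι) : a i = 0 := by
  have hli := (linearIndependent_toLinearMap K L L).comp (fun i => (e i : L →ₐ[K] L))
    fun i j hij => he (AlgEquiv.ext fun x => DFunLike.congr_fun hij x)
  refine Fintype.linearIndependent_iff.mp hli a ?_ i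
  ext x
  simpa using! h x

variable [FiniteDimensional K L]

theorem coeff_eq_zero_of_notMem_range {ι : Type*} [Fintype ι] (e : ι → L ≃ₐ[K] L)
    (f : (L ≃ₐ[K] L) → L) (b : ι → L)
    (h : ∀ x, ∑ τ, f τ * τ x = ∑ i, b i * e i x) {τ : L ≃ₐ[K] L} (hτ : ∀ i, e i ≠ τ) :
    f τ = 0 := by
  classical
  have key := coeff_eq_zero_of_forall_sum_algEquiv_eq_zero (e := id) Function.injective_id
    (a := fun τ => f τ - ∑ i, if e i = τ then b i else 0) (fun x => by
      simp only [sub_mul, Finset.sum_sub_distrib, id, h x, Finset.sum_mul]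
      rw [Finset.sum_comm]
      simp [ite_mul]) τ
  simpa [hτ] using key

/-- Every `K`-linear endomorphism of a Galois extension `L` is an `L`-linear combination of
automorphisms. -/
theorem exists_eq_sum_algEquiv [IsGalois K L] (ψ : L →ₗ[K] L) :
    ∃ c : (L ≃ₐ[K] L) → L, ∀ x, ψ x = ∑ τ, c τ * τ x := by
  have hli : LinearIndependent L fun τ : L ≃ₐ[K] L => (τ : L →ₐ[K] L).toLinearMap :=
    (linearIndependent_toLinearMap K L L).comp (fun τ : L ≃ₐ[K] L => (τ : L →ₐ[K] L))
      fun i j hij => AlgEquiv.ext fun x => DFunLike.congr_fun hij x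
  have hspan := hli.span_eq_top_of_card_eq_finrank' (by
    rw [Module.finrank_linearMap_self, ← Nat.card_eq_fintype_card, IsGalois.card_aut_eq_finrank])
  obtain ⟨c, hc⟩ := (Submodule.mem_span_range_iff_exists_fun L).mp
    (hspan ▸ Submodule.mem_top : ψ ∈ _)
  refine ⟨c, fun x => ?_⟩
  rw [← hc]
  simp

theorem algEquiv_apply_sum (ρ : L ≃ₐ[K] L) (c : (L ≃ₐ[K] L) → L) (x : L) :
    ρ (∑ τ, c τ * τ x) = ∑ τ, ρ (c (ρ⁻¹ * τ)) * τ x := by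
  rw [← Equiv.sum_comp (Equiv.mulLeft ρ) fun τ => ρ (c (ρ⁻¹ * τ)) * τ x]
  simp [map_sum]

end GaloisExpansion

section Twisted

variable {K L : Type*} [Field K] [Field L] [Algebra K L]

/-- The Zha–Kyureghyan–Wang multiplication for an automorphism `σ` in the role of `x ↦ x ^ q`. -/
def twistedMul (σ : L ≃ₐ[K] L) (h n : ℕ) (v x y : L) : L :=
  (σ ^ n) y * x + y * (σ ^ n) x -
    v * ((σ ^ (h + n)) y * (σ ^ (2 * h)) x + (σ ^ (2 * h)) y * (σ ^ (h + n)) x)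

variable {σ : L ≃ₐ[K] L} {h n : ℕ} {v : L}

theorem pow_eq_pow_iff_dvd_sub (hσ : orderOf σ = 3 * h) (i j : ℕ) :
    σ ^ i = σ ^ j ↔ (3 * h : ℤ) ∣ j - i := by
  rw [pow_eq_pow_iff_modEq, hσ, Nat.modEq_iff_dvd]
  push_cast
  rfl

theorem pow_ne_pow_of_sub_eq (hσ : orderOf σ = 3 * h) (hh : Odd h) (h1 : 1 < h)
    (hgcd : Nat.gcd h n = 1) {i j : ℕ} (k m : ℤ) (hij : (j : ℤ) - i = k * h + m * n)
    (hm : |m| ≤ 2) (hk : m = 0 → ¬ 3 ∣ k) : σ ^ i ≠ σ ^ j := by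
  rw [Ne, pow_eq_pow_iff_dvd_sub hσ, hij]
  intro hdvd
  have hcop : IsCoprime (h : ℤ) n := Nat.isCoprime_iff_coprime.mpr hgcd
  have hhm : (h : ℤ) ∣ m := hcop.dvd_of_dvd_mul_right
    ((dvd_add_right (dvd_mul_left _ _)).mp ((dvd_mul_left _ _).trans hdvd))
  have hm0 : m = 0 := Int.eq_zero_of_abs_lt_dvd hhm (by obtain ⟨r, rfl⟩ := hh; omega)
  subst hm0
  refine hk rfl (Int.dvd_of_mul_dvd_mul_right (a := h) (by omega) ?_)
  simpa using hdvd

theorem twistedExponents_injective (hσ : orderOf σ = 3 * h) (hh : Odd h) (h1 : 1 < h)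
    (hgcd : Nat.gcd h n = 1) :
    Function.Injective ![(1 : L ≃ₐ[K] L), σ ^ n, σ ^ (2 * h), σ ^ (h + n)] := by
  have key {i j : ℕ} (k m : ℤ) := pow_ne_pow_of_sub_eq (i := i) (j := j) hσ hh h1 hgcd k m
  have h01 := key (i := 0) (j := n) 0 1 (by simp) (by simp) (by simp)
  have h02 := key (i := 0) (j := 2 * h) 2 0 (by simp) (by simp) (by decide)
  have h03 := key (i := 0) (j := h + n) 1 1 (by simp) (by simp) (by simp)
  have h12 := key (i := n) (j := 2 * h) 2 (-1) (by push_cast; ring) (by simp) (by simp)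
  have h13 := key (i := n) (j := h + n) 1 0 (by simp) (by simp) (by decide)
  have h23 := key (i := 2 * h) (j := h + n) (-1) 1 (by push_cast; ring) (by simp) (by simp)
  rw [pow_zero] at h01 h02 h03
  intro i j hij
  fin_cases i <;> fin_cases j <;> simp_all

theorem algEquiv_apply_apply_apply (hσ : orderOf σ = 3) (x : L) : σ (σ (σ x)) = x := by
  have := AlgEquiv.congr_fun (hσ ▸ pow_orderOf_eq_one σ) x
  simpa using this

theorem injective_one_self_sq (hσ : orderOf σ = 3) :
    Function.Injective ![(1 : L ≃ₐ[K] L), σ, σ ^ 2] := by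
  have hinj := pow_injOn_Iio_orderOf (x := σ)
  rw [hσ] at hinj
  have h01 : (1 : L ≃ₐ[K] L) ≠ σ := fun h => by
    simpa using hinj (x₁ := 0) (by simp) (x₂ := 1) (by simp) (by simpa using h)
  have h02 : (1 : L ≃ₐ[K] L) ≠ σ ^ 2 := fun h => by
    simpa using hinj (x₁ := 0) (by simp) (x₂ := 2) (by simp) (by simpa using h)
  have h12 : σ ≠ σ ^ 2 := fun h => by
    simpa using hinj (x₁ := 1) (by simp) (x₂ := 2) (by simp) (by simpa using h)
  intro i j hij
  fin_cases i <;> fin_cases j <;> simp_all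

/-- Independence of `1, σ, σ²` for an automorphism `σ` of order three. -/
theorem eq_zero_of_forall_quadratic_eq_zero (hσ : orderOf σ = 3) {a b c : L}
    (H : ∀ x, a * x + b * σ x + c * σ (σ x) = 0) : a = 0 ∧ b = 0 ∧ c = 0 := by
  have key := coeff_eq_zero_of_forall_sum_algEquiv_eq_zero (injective_one_self_sq hσ)
    (a := ![a, b, c]) (fun x => by simpa [Fin.sum_univ_three] using H x)
  exact ⟨key 0, key 1, key 2⟩

theorem twistedMul_mul_left_of_fixed {l : L} (hl : σ l = l) (x y : L) :
    twistedMul σ h n v (l * x) y = twistedMul σ h n v x (l * y) := by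
  have hpow (k : ℕ) : (σ ^ k) l = l := by
    rw [AlgEquiv.coe_pow]
    exact Function.iterate_fixed hl k
  simp only [twistedMul, map_mul, hpow]
  ring

variable [FiniteDimensional K L]

theorem exists_twistedMul_coeff {ψ : L →ₗ[K] L} {c : (L ≃ₐ[K] L) → L}
    (hc : ∀ x, ψ x = ∑ τ, c τ * τ x)
    (hψ : ∀ y, ∃ z, ∀ x, twistedMul σ h n v (ψ x) y = twistedMul σ h n v x z)
    {τ : L ≃ₐ[K] L} (hτ : ∀ i, ![1, σ ^ n, σ ^ (2 * h), σ ^ (h + n)] i ≠ τ) (y : L) :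
    c τ * (σ ^ n) y + (σ ^ n) (c ((σ ^ n)⁻¹ * τ)) * y
      - v * (σ ^ (2 * h)) (c ((σ ^ (2 * h))⁻¹ * τ)) * (σ ^ (h + n)) y
      - v * (σ ^ (h + n)) (c ((σ ^ (h + n))⁻¹ * τ)) * (σ ^ (2 * h)) y = 0 := by
  obtain ⟨z, hz⟩ := hψ y
  refine coeff_eq_zero_of_notMem_range _ (fun τ => c τ * (σ ^ n) y
      + (σ ^ n) (c ((σ ^ n)⁻¹ * τ)) * y
      - v * (σ ^ (2 * h)) (c ((σ ^ (2 * h))⁻¹ * τ)) * (σ ^ (h + n)) y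
      - v * (σ ^ (h + n)) (c ((σ ^ (h + n))⁻¹ * τ)) * (σ ^ (2 * h)) y)
    ![(σ ^ n) z, z, -v * (σ ^ (h + n)) z, -v * (σ ^ (2 * h)) z] (fun x => ?_) hτ
  have := hz x
  rw [twistedMul, hc, algEquiv_apply_sum, algEquiv_apply_sum, algEquiv_apply_sum] at this
  simp only [Fin.sum_univ_four]
  trans twistedMul σ h n v x z
  · rw [← this]
    simp only [add_mul, sub_mul, Finset.sum_add_distrib, Finset.sum_sub_distrib, Finset.mul_sum,
      mul_add]
    rw [sub_add_eq_sub_sub]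
    congr 1
    · congr 1
      · congr 1 <;> refine Finset.sum_congr rfl fun _ _ => by ring
      · refine Finset.sum_congr rfl fun _ _ => by ring
    · refine Finset.sum_congr rfl fun _ _ => by ring
  · simp [twistedMul]
    ring


theorem coeff_eq_zero_of_ne_one (hσ : orderOf σ = 3 * h) (hh : Odd h) (h1 : 1 < h)
    (hgcd : Nat.gcd h n = 1) (hv : v ≠ 0) {ψ : L →ₗ[K] L} {c : (L ≃ₐ[K] L) → L}
    (hc : ∀ x, ψ x = ∑ τ, c τ * τ x)
    (hψ : ∀ y, ∃ z, ∀ x, twistedMul σ h n v (ψ x) y = twistedMul σ h n v x z)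
    {τ : L ≃ₐ[K] L} (hτ : τ ≠ 1) : c τ = 0 := by
  have hinj := twistedExponents_injective hσ hh h1 hgcd
  have key {τ : L ≃ₐ[K] L} (hτ : ∀ i, ![1, σ ^ n, σ ^ (2 * h), σ ^ (h + n)] i ≠ τ) (i : Fin 4) :=
    coeff_eq_zero_of_forall_sum_algEquiv_eq_zero hinj
      (a := ![(σ ^ n) (c ((σ ^ n)⁻¹ * τ)), c τ, -v * (σ ^ (h + n)) (c ((σ ^ (h + n))⁻¹ * τ)),
        -v * (σ ^ (2 * h)) (c ((σ ^ (2 * h))⁻¹ * τ))])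
      (fun y => by
        rw [← exists_twistedMul_coeff hc hψ hτ y]
        simp [Fin.sum_univ_four]
        ring) i
  have hzero (hτ : ∀ i, ![1, σ ^ n, σ ^ (2 * h), σ ^ (h + n)] i ≠ τ) : c τ = 0 := by
    simpa using key hτ 1
  have hshift (hτ : ∀ i, ![1, σ ^ n, σ ^ (2 * h), σ ^ (h + n)] i ≠ σ ^ (2 * h) * τ) :
      c τ = 0 := by
    simpa [hv, -AlgEquiv.coe_pow] using key hτ 3
  have hshift' (hτ : ∀ i, ![1, σ ^ n, σ ^ (2 * h), σ ^ (h + n)] i ≠ σ ^ n * τ) :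
      c τ = 0 := by
    simpa [-AlgEquiv.coe_pow] using key hτ 0
  have hne {i j : ℕ} (k m : ℤ) := pow_ne_pow_of_sub_eq (i := i) (j := j) hσ hh h1 hgcd k m
  by_cases hmem : ∀ i, ![1, σ ^ n, σ ^ (2 * h), σ ^ (h + n)] i ≠ τ
  · exact hzero hmem
  · obtain ⟨i, rfl⟩ : ∃ i, ![1, σ ^ n, σ ^ (2 * h), σ ^ (h + n)] i = τ := by
      simpa only [not_forall, not_not] using hmem
    fin_cases i
    · exact absurd rfl hτ
    · refine hshift fun i => ?_
      change _ ≠ σ ^ (2 * h) * σ ^ n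
      rw [← pow_add]
      fin_cases i
      · exact hne (i := 0) 2 1 (by push_cast; ring) (by simp) (by simp)
      · exact hne 2 0 (by push_cast; ring) (by simp) (by decide)
      · exact hne 0 1 (by push_cast; ring) (by simp) (by simp)
      · exact hne 1 0 (by push_cast; ring) (by simp) (by decide)
    · refine hshift fun i => ?_
      change _ ≠ σ ^ (2 * h) * σ ^ (2 * h)
      rw [← pow_add]
      fin_cases i
      · exact hne (i := 0) 4 0 (by push_cast; ring) (by simp) (by decide)
      · exact hne 4 (-1) (by push_cast; ring) (by simp) (by simp)
      · exact hne 2 0 (by push_cast; ring) (by simp) (by decide)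
      · exact hne 3 (-1) (by push_cast; ring) (by simp) (by simp)
    · refine hshift' fun i => ?_
      change _ ≠ σ ^ n * σ ^ (h + n)
      rw [← pow_add]
      fin_cases i
      · exact hne (i := 0) 1 2 (by push_cast; ring) (by simp) (by simp)
      · exact hne 1 1 (by push_cast; ring) (by simp) (by simp)
      · exact hne (-1) 2 (by push_cast; ring) (by simp) (by simp)
      · exact hne 0 1 (by push_cast; ring) (by simp) (by simp)

theorem eq_scalar_of_one_lt [IsGalois K L] (hσ : orderOf σ = 3 * h) (hh : Odd h) (h1 : 1 < h)
    (hgcd : Nat.gcd h n = 1) (hv : v ≠ 0) {ψ : L →ₗ[K] L}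
    (hψ : ∀ y, ∃ z, ∀ x, twistedMul σ h n v (ψ x) y = twistedMul σ h n v x z) :
    ∃ l, σ l = l ∧ ∀ x, ψ x = l * x := by
  obtain ⟨c, hc⟩ := exists_eq_sum_algEquiv ψ
  have hψ1 (x : L) : ψ x = c 1 * x := by
    rw [hc, Finset.sum_eq_single_of_mem 1 (Finset.mem_univ _) fun τ _ hτ => by
      rw [coeff_eq_zero_of_ne_one hσ hh h1 hgcd hv hc hψ hτ, zero_mul]]
    rfl
  refine ⟨c 1, ?_, hψ1⟩
  obtain ⟨z, hz⟩ := hψ 1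
  have key := coeff_eq_zero_of_forall_sum_algEquiv_eq_zero
    (twistedExponents_injective hσ hh h1 hgcd)
    (a := ![c 1 - (σ ^ n) z, (σ ^ n) (c 1) - z,
      -v * ((σ ^ (2 * h)) (c 1) - (σ ^ (h + n)) z), -v * ((σ ^ (h + n)) (c 1) - (σ ^ (2 * h)) z)])
    (fun x => by
      have := hz x
      rw [hψ1] at this
      rw [← sub_eq_zero_of_eq this]
      simp [Fin.sum_univ_four, twistedMul]
      ring)
  have e0 : c 1 = (σ ^ n) z := sub_eq_zero.mp (key 0)
  have e1 : (σ ^ n) (c 1) = z := sub_eq_zero.mp (key 1)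
  have e2 : (σ ^ (2 * h)) (c 1) = (σ ^ (h + n)) z := by
    simpa [hv, sub_eq_zero] using key 2
  have p2n : Function.IsPeriodicPt σ (2 * n) (c 1) := by
    rw [Function.IsPeriodicPt, Function.IsFixedPt, ← AlgEquiv.coe_pow, two_mul, pow_add,
      AlgEquiv.mul_apply, e1, ← e0]
  have ph : Function.IsPeriodicPt σ h (c 1) := by
    rw [Function.IsPeriodicPt, Function.IsFixedPt, ← AlgEquiv.coe_pow]
    rw [pow_add, AlgEquiv.mul_apply, ← e0, two_mul, pow_add, AlgEquiv.mul_apply] at e2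
    exact (σ ^ h).injective e2
  have hcop : Nat.gcd h (2 * n) = 1 :=
    Nat.Coprime.mul_right (Nat.coprime_two_right.mpr hh) hgcd
  simpa [hcop] using! ph.gcd p2n

theorem eq_scalar_of_one_two [IsGalois K L] (hσ : orderOf σ = 3) (hv : v ≠ 1)
    {ψ : L →ₗ[K] L}
    (hψ : ∀ y, ∃ z, ∀ x, twistedMul σ 1 2 v (ψ x) y = twistedMul σ 1 2 v x z) :
    ∃ l, σ l = l ∧ ∀ x, ψ x = l * x := by
  obtain ⟨c, hc⟩ := exists_eq_sum_algEquiv ψ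
  have h3 := algEquiv_apply_apply_apply hσ
  have hσ3 : σ ^ 3 = 1 := hσ ▸ pow_orderOf_eq_one σ
  have hv' : 1 - v ≠ 0 := sub_ne_zero.mpr hv.symm
  have hinj := injective_one_self_sq hσ
  have key {τ : L ≃ₐ[K] L} (h0 : 1 ≠ τ) (h2 : σ ^ 2 ≠ τ) :
      c τ = 0 ∧ c ((σ ^ 2)⁻¹ * τ) = 0 := by
    have := eq_zero_of_forall_quadratic_eq_zero hσ
      (a := (1 - v) * σ (σ (c ((σ ^ 2)⁻¹ * τ)))) (b := 0) (c := (1 - v) * c τ) (fun y => by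
        have := exists_twistedMul_coeff (h := 1) (n := 2) hc hψ (τ := τ) (fun i => by
          fin_cases i
          · exact h0
          · exact h2
          · exact h2
          · simpa [hσ3] using h0) y
        simp [hσ3] at this
        linear_combination this)
    simpa [hv'] using this.symm
  have hne1 : ∀ τ : L ≃ₐ[K] L, τ ≠ 1 → c τ = 0 := by
    intro τ hτ
    by_cases h2 : σ ^ 2 = τ
    · subst h2
      have := (key (τ := σ) (hinj.ne (show (0 : Fin 3) ≠ 1 by decide))
        (hinj.ne (show (2 : Fin 3) ≠ 1 by decide))).2
      convert this using 2
      rw [eq_inv_mul_iff_mul_eq, ← pow_add, pow_succ, hσ3, one_mul]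
    · exact (key hτ.symm h2).1
  have hψ1 (x : L) : ψ x = c 1 * x := by
    rw [hc, Finset.sum_eq_single_of_mem 1 (Finset.mem_univ _) fun τ _ hτ => by
      rw [hne1 τ hτ, zero_mul]]
    rfl
  obtain ⟨z, hz⟩ := hψ 1
  obtain ⟨e0, -, e2⟩ := eq_zero_of_forall_quadratic_eq_zero hσ
    (a := (1 - v) * (c 1 - σ (σ z))) (b := 0) (c := (1 - v) * (σ (σ (c 1)) - z)) (fun x => by
      have := hz x
      simp [twistedMul, hψ1, h3] at this
      linear_combination this)
  simp only [mul_eq_zero, hv', false_or, sub_eq_zero] at e0 e2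
  refine ⟨c 1, ?_, hψ1⟩
  conv_rhs => rw [e0, ← e2, h3]

theorem eq_scalar_of_one_one [IsGalois K L] (hσ : orderOf σ = 3) (h9 : (9 : L) ≠ 0)
    (hv : v * σ v * σ (σ v) = 1) {ψ : L →ₗ[K] L}
    (hψ : ∀ y, ∃ z, ∀ x, twistedMul σ 1 1 v (ψ x) y = twistedMul σ 1 1 v x z) :
    ∃ l, σ l = l ∧ ∀ x, ψ x = l * x := by
  obtain ⟨c, hc⟩ := exists_eq_sum_algEquiv ψ
  have h3 := algEquiv_apply_apply_apply hσ
  have hσ2 : σ 2 = 2 := map_ofNat σ 2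
  have hinj := injective_one_self_sq hσ
  have hc0 : ∀ τ, τ ∉ Set.range ![(1 : L ≃ₐ[K] L), σ, σ ^ 2] → c τ = 0 := by
    intro τ hτ
    have hτ' : ∀ i, ![(1 : L ≃ₐ[K] L), σ, σ ^ 2] i ≠ τ := fun i hi => hτ ⟨i, hi⟩
    refine (eq_zero_of_forall_quadratic_eq_zero hσ (a := σ (c (σ⁻¹ * τ))) (b := c τ)
      (c := -2 * v * σ (σ (c ((σ ^ 2)⁻¹ * τ)))) fun y => ?_).2.1
    have := exists_twistedMul_coeff (h := 1) (n := 1) hc hψ (τ := τ) (fun i => by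
      fin_cases i
      · exact hτ' 0
      · simpa using hτ' 1
      · exact hτ' 2
      · exact hτ' 2) y
    simp at this
    linear_combination this
  obtain ⟨a, b, d, hψ3⟩ : ∃ a b d, ∀ x, ψ x = a * x + b * σ x + d * σ (σ x) := by
    refine ⟨c 1, c σ, c (σ ^ 2), fun x => ?_⟩
    rw [hc, ← Fintype.sum_of_injective _ hinj (fun i => c (![1, σ, σ ^ 2] i) * ![1, σ, σ ^ 2] i x)
      (fun τ => c τ * τ x) (fun τ hτ => by rw [hc0 τ hτ, zero_mul]) fun _ => rfl]
    simp [Fin.sum_univ_three]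
  have key (y : L) : ∃ z, σ z = σ y * a + y * σ d - 2 * v * σ (σ y) * σ (σ b) ∧
      z = σ y * b + y * σ a - 2 * v * σ (σ y) * σ (σ d) := by
    obtain ⟨z, hz⟩ := hψ y
    obtain ⟨e0, e1, -⟩ := eq_zero_of_forall_quadratic_eq_zero hσ
      (a := σ y * a + y * σ d - 2 * v * σ (σ y) * σ (σ b) - σ z)
      (b := σ y * b + y * σ a - 2 * v * σ (σ y) * σ (σ d) - z)
      (c := σ y * d + y * σ b - 2 * v * σ (σ y) * σ (σ a) + 2 * v * σ (σ z)) (fun x => by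
        have := hz x
        simp [twistedMul, hψ3, h3] at this
        linear_combination this)
    exact ⟨z, by linear_combination -e0, by linear_combination -e1⟩
  obtain ⟨hd, ha, hb⟩ := eq_zero_of_forall_quadratic_eq_zero hσ
    (a := σ d + 2 * σ v * d) (b := a - σ (σ a)) (c := -2 * v * σ (σ b) - σ b) (fun y => by
      obtain ⟨z, e0, e1⟩ := key y
      have := congrArg σ e1
      simp [h3, hσ2] at this
      linear_combination this - e0)
  have hd1 := congrArg σ hd
  have hd2 := congrArg σ hd1
  have hb1 := congrArg σ hb
  have hb2 := congrArg σ hb1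
  simp only [map_add, map_sub, map_mul, map_neg, map_zero, hσ2, h3] at hd1 hd2 hb1 hb2
  have hd0 : d = 0 := (mul_eq_zero.mp (show 9 * d = 0 by
    linear_combination hd2 - 2 * v * hd1 + 4 * v * σ (σ v) * hd - 8 * d * hv)).resolve_left h9
  have hb0 : σ b = 0 := (mul_eq_zero.mp (show 9 * σ b = 0 by
    linear_combination -hb + 2 * v * hb1 - 4 * v * σ v * hb2 - 8 * σ b * hv)).resolve_left h9
  have hb0' : b = 0 := by simpa using hb0
  refine ⟨a, ?_, fun x => by rw [hψ3, hd0, hb0']; ring⟩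
  conv_lhs => rw [sub_eq_zero.mp ha, h3]

theorem natCard_fixed_of_finrank_eq_mul_orderOf [IsGalois K L] (σ : L ≃ₐ[K] L) {g : ℕ}
    (hg : Module.finrank K L = g * orderOf σ) :
    Nat.card {l : L // σ l = l} = Nat.card K ^ g := by
  let F := IntermediateField.fixedField (Subgroup.zpowers σ)
  have hmem (l : L) : l ∈ F ↔ σ l = l := by
    rw [IntermediateField.mem_fixedField_iff]
    exact ⟨fun H => H σ (Subgroup.mem_zpowers σ), fun H τ hτ =>
      (Subgroup.zpowers_le (H := MulAction.stabilizer (L ≃ₐ[K] L) l)).mpr H hτ⟩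
  have hrank : Module.finrank K F = g := by
    have h1 := Module.finrank_mul_finrank K F L
    rw [IntermediateField.finrank_fixedField_eq_card, Nat.card_zpowers, hg] at h1
    exact Nat.eq_of_mul_eq_mul_right (orderOf_pos σ) h1
  rw [← hrank, ← Module.natCard_eq_pow_finrank (K := K) (V := F)]
  exact Nat.card_congr (Equiv.subtypeEquivRight fun l => (hmem l).symm)

end Twisted

section GaloisField

/-- The automorphism `x ↦ x ^ (p ^ g)` of `GaloisField p N`. -/
noncomputable def frobeniusPow (p : ℕ) [Fact p.Prime] (g N : ℕ) :
    GaloisField p N ≃ₐ[ZMod p] GaloisField p N :=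
  FiniteField.frobeniusAlgEquivOfAlgebraic (ZMod p) (GaloisField p N) ^ g

variable {p : ℕ} [Fact p.Prime]

theorem frobeniusPow_pow_apply (g N k : ℕ) (x : GaloisField p N) :
    (frobeniusPow p g N ^ k) x = x ^ (p ^ g) ^ k := by
  rw [frobeniusPow, ← pow_mul, AlgEquiv.coe_pow,
    FiniteField.coe_frobeniusAlgEquivOfAlgebraic_iterate, ZMod.card, pow_mul]

theorem frobeniusPow_apply (g N : ℕ) (x : GaloisField p N) :
    frobeniusPow p g N x = x ^ p ^ g := by
  simpa using frobeniusPow_pow_apply g N 1 x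

theorem orderOf_frobeniusPow {g m : ℕ} (hg : 0 < g) (hm : m ≠ 0) :
    orderOf (frobeniusPow p g (g * m)) = m := by
  rw [frobeniusPow, orderOf_pow, FiniteField.orderOf_frobeniusAlgEquivOfAlgebraic,
    GaloisField.finrank p (mul_ne_zero hg.ne' hm), Nat.gcd_mul_right_left,
    Nat.mul_div_cancel_left _ hg]

theorem zkwMul_eq_twistedMul (g h n : ℕ) (v x y : GaloisField p (g * (3 * h))) :
    zkwMul p g h n (p ^ g) v x y = twistedMul (frobeniusPow p g (g * (3 * h))) h n v x y := by
  simp only [zkwMul, twistedMul, frobeniusPow_pow_apply]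

/-- An automorphism fixing a generator of the multiplicative group is trivial. -/
theorem algEquiv_eq_one_of_apply_generator {K L : Type*} [Field K] [Field L] [Algebra K L]
    {σ : L ≃ₐ[K] L} {u : L} (hu : ∀ x : L, x ≠ 0 → ∃ i : ℕ, x = u ^ i) (h : σ u = u) : σ = 1 := by
  ext x
  rcases eq_or_ne x 0 with rfl | hx
  · simp
  · obtain ⟨i, rfl⟩ := hu x hx
    simp [h]

theorem eq_scalar_of_zkwMul {g h n : ℕ} (hg : 0 < g) (hh : Odd h) (hn0 : 0 < n)
    (hn3 : n < 3 * h) (hgcd : Nat.gcd h n = 1) (hcond : (h + n) % 3 = 0 ∨ p ^ g % 3 = 1)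
    {u v : GaloisField p (g * (3 * h))} (hu0 : u ≠ 0)
    (huprim : ∀ x : GaloisField p (g * (3 * h)), x ≠ 0 → ∃ i : ℕ, x = u ^ i)
    (hv : v = u ^ ((p ^ g) ^ h - 1))
    {ψ : GaloisField p (g * (3 * h)) →ₗ[ZMod p] GaloisField p (g * (3 * h))}
    (hψ : ∀ y, ∃ z, ∀ x, zkwMul p g h n (p ^ g) v (ψ x) y = zkwMul p g h n (p ^ g) v x z) :
    ∃ l, frobeniusPow p g (g * (3 * h)) l = l ∧ ∀ x, ψ x = l * x := by
  simp only [zkwMul_eq_twistedMul] at hψ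
  have hh0 : 0 < h := hh.pos
  have hσ := orderOf_frobeniusPow (p := p) hg (m := 3 * h) (by omega)
  have hv0 : v ≠ 0 := hv ▸ pow_ne_zero _ hu0
  rcases (show 1 ≤ h from hh0).lt_or_eq with h1 | rfl
  · exact eq_scalar_of_one_lt hσ hh h1 hgcd hv0 hψ
  set σ := frobeniusPow p g (g * (3 * 1)) with hσdef
  have hvu : v * u = σ u := by
    rw [hσdef, frobeniusPow_apply, hv, pow_one, ← pow_succ,
      Nat.sub_add_cancel (Nat.one_le_pow _ _ (Fact.out : p.Prime).pos)]
  obtain rfl | rfl : n = 1 ∨ n = 2 := by omega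
  · refine eq_scalar_of_one_one hσ (fun h9 => ?_) ?_ hψ
    · have h3 : (3 : GaloisField p (g * (3 * 1))) = 0 := by
        have : (3 : GaloisField p (g * (3 * 1))) * 3 = 0 := by linear_combination h9
        simpa using this
      have hp3 : p ∣ 3 := (CharP.cast_eq_zero_iff (GaloisField p (g * (3 * 1))) p 3).mp
        (by exact_mod_cast h3)
      have hp3' : p = 3 := (Nat.prime_dvd_prime_iff_eq Fact.out Nat.prime_three).mp hp3
      have : 3 ∣ p ^ g := dvd_pow (dvd_of_eq hp3'.symm) hg.ne'
      omega
    · have hσu : σ u ≠ 0 := by simpa using hu0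
      have hσσu : σ (σ u) ≠ 0 := by simpa using hu0
      have e1 : σ v * σ u = σ (σ u) := by rw [← map_mul, hvu]
      have e2 : σ (σ v) * σ (σ u) = u := by
        rw [← map_mul, ← map_mul, hvu, algEquiv_apply_apply_apply hσ]
      refine mul_right_cancel₀ (mul_ne_zero (mul_ne_zero hu0 hσu) hσσu) ?_
      calc v * σ v * σ (σ v) * (u * σ u * σ (σ u))
          = (v * u) * (σ v * σ u) * (σ (σ v) * σ (σ u)) := by ring
        _ = 1 * (u * σ u * σ (σ u)) := by rw [hvu, e1, e2]; ring
  · refine eq_scalar_of_one_two hσ (fun hv1 => ?_) hψ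
    have hσ1 : σ = 1 :=
      algEquiv_eq_one_of_apply_generator huprim (by rw [← hvu, hv1, one_mul])
    rw [hσ1, orderOf_one] at hσ
    omega

end GaloisField

theorem statement18 (p g h n q : ℕ) [Fact p.Prime] (hp : Odd p) (hg : 0 < g)
    (hq : q = p ^ g) (hh : Odd h) (hn0 : 0 < n) (hn3 : n < 3 * h)
    (hgcd : Nat.gcd h n = 1)
    (hcond : (h + n) % 3 = 0 ∨ q % 3 = 1)
    -- `u` is a primitive element of `F_{q^{3h}}` and `v = u^{q^h − 1}`
    (u v : GaloisField p (g * (3 * h))) (hu0 : u ≠ 0)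
    (huprim : ∀ x : GaloisField p (g * (3 * h)), x ≠ 0 → ∃ i : ℕ, x = u ^ i)
    (hv : v = u ^ (q ^ h - 1)) :
    -- the middle-nucleus set is the set of scalar maps by elements of `F_q`
    {ψ : GaloisField p (g * (3 * h)) →ₗ[ZMod p] GaloisField p (g * (3 * h)) |
        ∀ y, ∃ z, ∀ x, zkwMul p g h n q v (ψ x) y = zkwMul p g h n q v x z} =
      {ψ : GaloisField p (g * (3 * h)) →ₗ[ZMod p] GaloisField p (g * (3 * h)) |
        ∃ l : GaloisField p (g * (3 * h)), l ^ q = l ∧ ∀ x, ψ x = l * x} ∧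
    -- hence it has exactly q elements
    Nat.card {ψ : GaloisField p (g * (3 * h)) →ₗ[ZMod p] GaloisField p (g * (3 * h)) |
        ∀ y, ∃ z, ∀ x, zkwMul p g h n q v (ψ x) y = zkwMul p g h n q v x z} = q := by
  subst hq
  have hset : {ψ : GaloisField p (g * (3 * h)) →ₗ[ZMod p] GaloisField p (g * (3 * h)) |
      ∀ y, ∃ z, ∀ x, zkwMul p g h n (p ^ g) v (ψ x) y = zkwMul p g h n (p ^ g) v x z} =
      {ψ : GaloisField p (g * (3 * h)) →ₗ[ZMod p] GaloisField p (g * (3 * h)) |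
        ∃ l : GaloisField p (g * (3 * h)), l ^ p ^ g = l ∧ ∀ x, ψ x = l * x} := by
    ext ψ
    simp only [Set.mem_ofPred_eq, ← frobeniusPow_apply]
    refine ⟨eq_scalar_of_zkwMul hg hh hn0 hn3 hgcd hcond hu0 huprim hv, ?_⟩
    rintro ⟨l, hl, hψ⟩ y
    refine ⟨l * y, fun x => ?_⟩
    rw [hψ, zkwMul_eq_twistedMul, zkwMul_eq_twistedMul, twistedMul_mul_left_of_fixed hl]
  refine ⟨hset, ?_⟩
  rw [hset]
  have hm : 3 * h ≠ 0 := by have := hh.pos; omega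
  have hcard := natCard_fixed_of_finrank_eq_mul_orderOf (frobeniusPow p g (g * (3 * h)))
    (g := g) (by rw [orderOf_frobeniusPow hg hm, GaloisField.finrank p (mul_ne_zero hg.ne' hm)])
  rw [Nat.card_zmod] at hcard
  refine Eq.trans (Eq.symm ?_) hcard
  refine Nat.card_congr (Equiv.ofBijective (fun l => ⟨LinearMap.mulLeft (ZMod p) l.1, l.1,
    (frobeniusPow_apply _ _ _).symm.trans l.2, fun x => rfl⟩) ⟨fun a b hab => ?_, ?_⟩)
  · have := LinearMap.congr_fun (congrArg Subtype.val hab) 1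
    simpa [Subtype.ext_iff] using this
  · rintro ⟨ψ, l, hl, hψ⟩
    exact ⟨⟨l, (frobeniusPow_apply _ _ _).trans hl⟩,
      Subtype.ext (LinearMap.ext fun x => (hψ x).symm)⟩
end
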